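/- The real dimension of the space of infinitesimal deformations of the homogeneous sphere map H_n^d equals ((2d+n)/d) · K(n,d)², where K(n,d) = C(n+d−1,d). Equivalently, dim_ℝ hol(H_n^d) = K(n,d)² + 2 K(n,d) C(n+d−1, n). -/

import Mathlib

/-!
Write `⟨X, H⟩ = ∑ a, X a * conj (H a)`, where the `H a` form a basis of the forms of degree `d` in
`n` variables.

Every family of coefficients of degree less than `d` extends to an infinitesimal deformation.
Indeed, multiplying by powers of `∑ i, z i * conj (z i) = 1` shows that on the sphere the conjugate
of a polynomial of degree at most `d` is `⟨Z, H⟩` for some polynomial map `Z`. Applied to the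
components of the prescribed low-order part `Y`, this turns `Y - ∑ b, H b • Z b` into a map whose
pairing with `H` is `⟨Y, H⟩ - conj ⟨Y, H⟩`, while the correction has no terms of degree less than
`d`.

A deformation without terms of degree less than `d` has none of higher degree either, by comparing
Fourier coefficients along the circles `w ↦ w • z`. It is thus `A • H` for a constant matrix `A`,
and by polarization `Re ⟨A • H, H⟩ = 0` says that `A` is skew-Hermitian. With `K` forms in the
basis, the low-order coefficients contribute `2 * K * (n + d - 1).choose n` real parameters, the
skew-Hermitian matrices `K ^ 2`.
-/

open Finset

/-- The component of the homogeneous sphere map `H_n^d` at `α`: `√(d!/α!) z^α`. -/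
noncomputable def homComp {n : ℕ} (α : Fin n → ℕ) (z : Fin n → ℂ) : ℂ :=
  (Real.sqrt (Nat.multinomial Finset.univ α) : ℂ) * ∏ i, z i ^ α i

open MvPolynomial
open scoped ComplexConjugate

theorem finrank_map_add_finrank_inf_ker {K V W : Type*} [DivisionRing K] [AddCommGroup V]
    [Module K V] [AddCommGroup W] [Module K W] (f : V →ₗ[K] W) (p : Submodule K V)
    [Module.Finite K (p.map f)] [Module.Finite K ↥(p ⊓ f.ker)] :
    Module.finrank K (p.map f) + Module.finrank K ↥(p ⊓ f.ker) = Module.finrank K p := by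
  have : Module.Finite K p := Module.Finite.iff_fg.mpr <|
    Submodule.fg_of_fg_map_of_fg_inf_ker f (Module.Finite.iff_fg.mp inferInstance)
      (Module.Finite.iff_fg.mp inferInstance)
  rw [← LinearMap.finrank_range_add_finrank_ker (f.domRestrict p), LinearMap.range_domRestrict,
    LinearMap.ker_domRestrict, ← Submodule.map_comap_subtype, Submodule.finrank_map_subtype_eq]

theorem finrank_real_skewAdjoint (A : Type*) [AddCommGroup A] [Module ℂ A] [StarAddMonoid A]
    [StarModule ℂ A] [Module.Finite ℂ A] :
    Module.finrank ℝ (skewAdjoint.submodule ℝ A) = Module.finrank ℂ A := by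
  have : Module.Finite ℝ A := Module.Finite.trans ℂ A
  have hbij : Function.Bijective (skewAdjoint.negISMul (A := A)) := by
    refine ⟨fun a b hab ↦ ?_, fun b ↦
      ⟨⟨Complex.I • b, Complex.I_smul_mem_skewAdjoint_iff_isSelfAdjoint.mpr b.2⟩, ?_⟩⟩
    · rw [Subtype.ext_iff, ← skewAdjoint.I_smul_neg_I a, hab, skewAdjoint.I_smul_neg_I]
    · ext
      simp [smul_smul]
  have hself := (LinearEquiv.ofBijective _ hbij).finrank_eq
  have hdecomp := (StarModule.decomposeProdAdjoint ℝ A).finrank_eq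
  have : Module.Finite ℝ (skewAdjoint A) :=
    inferInstanceAs (Module.Finite ℝ (skewAdjoint.submodule ℝ A))
  have : Module.Finite ℝ (selfAdjoint A) :=
    inferInstanceAs (Module.Finite ℝ (selfAdjoint.submodule ℝ A))
  change Module.finrank ℝ (skewAdjoint A) = _
  rw [Module.finrank_prod, ← hself, finrank_real_of_complex] at hdecomp
  omega

theorem card_finsupp_degree_lt (σ : Type*) [Fintype σ] [Nonempty σ] (d : ℕ) :
    Nat.card {s : σ →₀ ℕ // s.degree < d} =
      (Fintype.card σ + d - 1).choose (Fintype.card σ) := by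
  classical
  have hfinite := Finsupp.finite_of_degree_lt (σ := σ) d
  have hfiber (k : ℕ) (hk : k ∈ range d) : #{s ∈ hfinite.toFinset | s.degree = k} =
      (Fintype.card σ).multichoose k := by
    rw [← card_univ, ← card_finsuppAntidiag_nat_eq_multichoose]
    congr 1
    ext s
    simp only [mem_filter, Set.Finite.mem_toFinset, Set.mem_ofPred_eq, mem_finsuppAntidiag,
      Finsupp.degree_eq_sum]
    have hkd := mem_range.mp hk
    simp only [subset_univ, and_true, and_iff_right_iff_imp]
    omega
  rw [Nat.subtype_card hfinite.toFinset (by simp), card_eq_sum_card_fiberwise (t := range d)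
    (f := Finsupp.degree) (by intro s; simp), sum_congr rfl hfiber]
  rcases d with - | d
  · simp [Nat.choose_eq_zero_of_lt, Fintype.card_pos]
  · rw [Nat.sum_range_multichoose, ← add_assoc, Nat.add_sub_cancel, add_comm d]

theorem card_piAntidiag_univ (σ : Type*) [Fintype σ] [DecidableEq σ] (d : ℕ) :
    #(piAntidiag (univ : Finset σ) d) = (Fintype.card σ + d - 1).choose d := by
  rw [← map_sym_eq_piAntidiag, card_map, sym_univ, card_univ, Sym.card_sym_eq_choose]

theorem sqrt_multinomial_ne_zero {σ : Type*} [Fintype σ] (α : σ → ℕ) :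
    (Real.sqrt (Nat.multinomial univ α) : ℂ) ≠ 0 := by
  simp [(Nat.multinomial_pos _ _).ne']

theorem infinite_setOf_norm_eq_one : {w : ℂ | ‖w‖ = 1}.Infinite := by
  have hsphere : {w : ℂ | ‖w‖ = 1} = Metric.sphere 0 1 := by ext; simp
  rw [hsphere]
  refine (isPreconnected_sphere (by simp) 0 1).infinite_of_nontrivial
    ⟨1, by simp, -1, by simp, by norm_num⟩

/-- On the circle `conj w = w⁻¹`, so `(q w + conj (q w)) * w ^ N` is a polynomial in `w`. -/
theorem coeff_eq_zero_of_re_eval_eq_zero_on_circle {q : Polynomial ℂ}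
    (hq : ∀ w : ℂ, ‖w‖ = 1 → (q.eval w).re = 0) {k : ℕ} (hk : k ≠ 0) : q.coeff k = 0 := by
  set N := q.natDegree
  set r := (q.map conj).reverse
  have hN : (q.map conj).natDegree = N := Polynomial.natDegree_map _
  have hsum : q * Polynomial.X ^ N + r = 0 := by
    refine Polynomial.eq_zero_of_infinite_isRoot _ (infinite_setOf_norm_eq_one.mono fun w hw ↦ ?_)
    have hw0 : w ≠ 0 := norm_ne_zero_iff.mp (hw.symm ▸ one_ne_zero)
    let _ := invertibleOfNonzero (inv_ne_zero hw0)
    have hrw : r.eval w = conj (q.eval w) * w ^ N := by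
      have h := Polynomial.eval₂_reverse_mul_pow (RingHom.id ℂ) w⁻¹ (q.map conj)
      rw [invOf_eq_inv, inv_inv, hN, ← Polynomial.eval, ← Polynomial.eval, Complex.inv_eq_conj hw,
        Polynomial.eval_map_apply] at h
      rw [← h, mul_assoc, ← mul_pow, ← Complex.inv_eq_conj hw, inv_mul_cancel₀ hw0, one_pow,
        mul_one]
    have hre : q.eval w + conj (q.eval w) = 0 := by simp [Complex.add_conj, hq w hw]
    simp [hrw, ← add_mul, hre]
  have hr : r.coeff (k + N) = 0 := Polynomial.coeff_eq_zero_of_natDegree_lt <|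
    (Polynomial.reverse_natDegree_le _).trans_lt (by omega)
  simpa [hr] using congr(Polynomial.coeff $hsum (k + N))

section MvPolynomial

variable {σ : Type*}

/-- Polarization: substituting `z = x + iy`, `w = x - iy` gives a polynomial vanishing at all real
points `(x, y)`. -/
theorem eq_zero_of_eval_conj_eq_zero {p : MvPolynomial (σ ⊕ σ) ℂ}
    (hp : ∀ z : σ → ℂ, eval (Sum.elim z (conj ∘ z)) p = 0) : p = 0 := by
  let f : σ ⊕ σ → MvPolynomial (σ ⊕ σ) ℂ :=
    Sum.elim (fun i ↦ X (.inl i) + C Complex.I * X (.inr i))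
      (fun i ↦ X (.inl i) - C Complex.I * X (.inr i))
  have eval_bind (x y : σ → ℂ) : eval (Sum.elim x y) (bind₁ f p) =
      eval (Sum.elim (fun i ↦ x i + Complex.I * y i) (fun i ↦ x i - Complex.I * y i)) p := by
    rw [eval, eval₂Hom_bind₁]
    congr 2 with (i | i) <;> simp [f]
  have hbind : bind₁ f p = 0 := by
    refine funext_set (fun _ ↦ Set.range ((↑) : ℝ → ℂ))
      (fun _ ↦ Set.infinite_range_of_injective Complex.ofReal_injective) fun x hx ↦ ?_
    choose t ht using fun i ↦ hx i trivial
    obtain rfl : (fun i ↦ (t i : ℂ)) = x := _root_.funext ht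
    rw [map_zero, ← hp fun i ↦ t (.inl i) + Complex.I * t (.inr i), ← Sum.elim_comp_inl_inr
      (fun i ↦ (t i : ℂ)), eval_bind]
    congr 3 with i
    simp [sub_eq_add_neg]
  refine MvPolynomial.funext fun x ↦ ?_
  obtain ⟨u, v, rfl⟩ : ∃ u v, x = Sum.elim u v := ⟨_, _, (Sum.elim_comp_inl_inr x).symm⟩
  have huv := eval_bind (fun i ↦ (u i + v i) / 2) fun i ↦ (u i - v i) / (2 * Complex.I)
  rw [hbind, map_zero] at huv
  rw [map_zero, huv]
  congr 3 <;> ext i <;> field_simp [Complex.I_ne_zero] <;> ring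

theorem coeff_aeval_C_mul_X {R : Type*} [CommSemiring R] (z : σ → R) (p : MvPolynomial σ R)
    (k : ℕ) :
    (aeval (fun i ↦ Polynomial.C (z i) * Polynomial.X) p).coeff k =
      eval z (homogeneousComponent k p) := by
  induction p using MvPolynomial.induction_on' with
  | monomial s c =>
    have hs : aeval (fun i ↦ Polynomial.C (z i) * Polynomial.X) (monomial s c) =
        Polynomial.C (eval z (monomial s c)) * Polynomial.X ^ s.degree := by
      simp [aeval_monomial, eval_monomial, mul_pow, Finsupp.prod, Finset.prod_mul_distrib,
        Finset.prod_pow_eq_pow_sum, Finsupp.degree_apply, mul_assoc]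
    rw [hs, Polynomial.coeff_C_mul_X_pow,
      homogeneousComponent_of_mem (isHomogeneous_monomial c rfl), apply_ite (eval z), map_zero]
  | add p q hp hq => simp [hp, hq]

theorem eval_aeval_C_mul_X {R : Type*} [CommSemiring R] (z : σ → R) (p : MvPolynomial σ R)
    (t : R) :
    (aeval (fun i ↦ Polynomial.C (z i) * Polynomial.X) p).eval t = eval (t • z) p := by
  rw [← Polynomial.coe_evalRingHom, aeval_def, hom_eval₂]
  simp only [Polynomial.algebraMap_eq, Polynomial.coe_evalRingHom, Polynomial.eval_mul,
    Polynomial.eval_C, Polynomial.eval_X, eval]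
  congr 2 <;> ext <;> simp [mul_comm]

theorem eval_smul_of_isHomogeneous {R : Type*} [CommSemiring R] {p : MvPolynomial σ R} {k : ℕ}
    (hp : p.IsHomogeneous k) (t : R) (z : σ → R) : eval (t • z) p = t ^ k * eval z p := by
  have hline : aeval (fun i ↦ Polynomial.C (z i) * Polynomial.X) p =
      Polynomial.C (eval z p) * Polynomial.X ^ k := by
    ext l
    rw [coeff_aeval_C_mul_X, homogeneousComponent_of_mem hp, Polynomial.coeff_C_mul_X_pow,
      apply_ite (eval z), map_zero]
  rw [← eval_aeval_C_mul_X, hline, Polynomial.eval_mul, Polynomial.eval_C, Polynomial.eval_pow,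
    Polynomial.eval_X, mul_comm]

theorem coeff_mul_eq_zero_of_isHomogeneous {R : Type*} [CommSemiring R] {p : MvPolynomial σ R}
    {d : ℕ} (hp : p.IsHomogeneous d) (q : MvPolynomial σ R) {s : σ →₀ ℕ} (hs : s.degree < d) :
    coeff s (p * q) = 0 := by
  classical
  rw [coeff_mul]
  refine Finset.sum_eq_zero fun x hx ↦ ?_
  have hdegree : x.1.degree + x.2.degree = s.degree := by
    rw [← map_add, HasAntidiagonal.mem_antidiagonal.mp hx]
  rw [hp.coeff_eq_zero (by omega), zero_mul]

variable {ι : Type*} {d : ℕ}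

/-- The coefficients of degree less than `d` of a polynomial map. -/
noncomputable def lowCoeffs (σ ι : Type*) (d : ℕ) :
    (ι → MvPolynomial σ ℂ) →ₗ[ℝ] (ι → {s : σ →₀ ℕ // s.degree < d} → ℂ) :=
  (LinearMap.pi fun s ↦ (lcoeff ℂ s.1).restrictScalars ℝ).compLeft ι

theorem lowCoeffs_apply (d : ℕ) (X : ι → MvPolynomial σ ℂ) (a : ι)
    (s : {s : σ →₀ ℕ // s.degree < d}) : lowCoeffs σ ι d X a s = coeff s.1 (X a) := rfl

theorem mem_ker_lowCoeffs {X : ι → MvPolynomial σ ℂ} :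
    X ∈ (lowCoeffs σ ι d).ker ↔ ∀ a s, s.degree < d → coeff s (X a) = 0 := by
  simp [funext_iff, lowCoeffs_apply]

/-! ### Hermitian pairing -/

variable [Fintype ι]

/-- The function `⟨X, H⟩ = ∑ a, X a * conj (H a)` at the point `z`, complex linear in the
polynomial map `X`. -/
noncomputable def hermitianPairing (H : ι → MvPolynomial σ ℂ) (z : σ → ℂ) :
    (ι → MvPolynomial σ ℂ) →ₗ[ℂ] ℂ where
  toFun X := ∑ a, eval z (X a) * conj (eval z (H a))
  map_add' X Y := by simp [add_mul, Finset.sum_add_distrib]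
  map_smul' c X := by simp [mul_assoc, Finset.mul_sum]

theorem hermitianPairing_apply (H : ι → MvPolynomial σ ℂ) (z : σ → ℂ)
    (X : ι → MvPolynomial σ ℂ) :
    hermitianPairing H z X = ∑ a, eval z (X a) * conj (eval z (H a)) := rfl

theorem hermitianPairing_smul (H : ι → MvPolynomial σ ℂ) (z : σ → ℂ) (p : MvPolynomial σ ℂ)
    (X : ι → MvPolynomial σ ℂ) :
    hermitianPairing H z (p • X) = eval z p * hermitianPairing H z X := by
  simp [hermitianPairing_apply, Finset.mul_sum, mul_assoc]

theorem hermitianPairing_smul_point {H X : ι → MvPolynomial σ ℂ} {k : ℕ}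
    (hH : ∀ a, (H a).IsHomogeneous d) (hX : ∀ a, (X a).IsHomogeneous k) (t : ℂ) (z : σ → ℂ) :
    hermitianPairing H (t • z) X = t ^ k * conj t ^ d * hermitianPairing H z X := by
  simp only [hermitianPairing_apply, eval_smul_of_isHomogeneous (hH _),
    eval_smul_of_isHomogeneous (hX _), map_mul, map_pow, Finset.mul_sum]
  exact Finset.sum_congr rfl fun a _ ↦ by ring

theorem eq_zero_of_hermitianPairing_eq_zero {H X : ι → MvPolynomial σ ℂ}
    (hli : LinearIndependent ℂ H) (hX : ∀ z, hermitianPairing H z X = 0) : X = 0 := by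
  let p : MvPolynomial (σ ⊕ σ) ℂ :=
    ∑ a, rename Sum.inl (X a) * rename Sum.inr (map conj (H a))
  have eval_p (u v : σ → ℂ) :
      eval (Sum.elim u (conj ∘ v)) p = ∑ a, eval u (X a) * conj (eval v (H a)) := by
    simp [p, eval_rename, eval_map, eval₂_comp]
  have hp : p = 0 := eq_zero_of_eval_conj_eq_zero fun z ↦ by rw [eval_p, ← hX z]; rfl
  ext1 a
  refine MvPolynomial.funext fun u ↦ ?_
  have hcomb : ∑ a, conj (eval u (X a)) • H a = 0 := MvPolynomial.funext fun v ↦ by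
    have huv := congr(conj $(eval_p u v))
    rw [hp] at huv
    simpa using huv.symm
  simpa using Fintype.linearIndependent_iff.mp hli _ hcomb a

/-- The polynomial map `A • H` for a constant matrix `A`, as a linear function of `A`. -/
noncomputable def matrixDeformation (H : ι → MvPolynomial σ ℂ) :
    Matrix ι ι ℂ →ₗ[ℂ] (ι → MvPolynomial σ ℂ) :=
  (Fintype.linearCombination ℂ H).compLeft ι

theorem matrixDeformation_apply (H : ι → MvPolynomial σ ℂ) (A : Matrix ι ι ℂ) (a : ι) :
    matrixDeformation H A a = ∑ b, A a b • H b := rfl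

theorem matrixDeformation_injective {H : ι → MvPolynomial σ ℂ} (hli : LinearIndependent ℂ H) :
    Function.Injective (matrixDeformation H) :=
  hli.fintypeLinearCombination_injective.comp_left

theorem isHomogeneous_matrixDeformation {H : ι → MvPolynomial σ ℂ}
    (hH : ∀ a, (H a).IsHomogeneous d) (A : Matrix ι ι ℂ) (a : ι) :
    (matrixDeformation H A a).IsHomogeneous d :=
  (homogeneousSubmodule σ ℂ d).sum_mem fun b _ ↦ Submodule.smul_mem _ _ (hH b)

theorem hermitianPairing_matrixDeformation_star (H : ι → MvPolynomial σ ℂ) (z : σ → ℂ)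
    (A : Matrix ι ι ℂ) :
    hermitianPairing H z (matrixDeformation H (star A)) =
      conj (hermitianPairing H z (matrixDeformation H A)) := by
  simp only [hermitianPairing_apply, matrixDeformation_apply, map_sum, smul_eval, map_mul,
    Complex.conj_conj, Finset.sum_mul, Matrix.star_apply]
  rw [Finset.sum_comm]
  exact Finset.sum_congr rfl fun a _ ↦ Finset.sum_congr rfl fun b _ ↦ by
    rw [RCLike.star_def, mul_right_comm]

section FiniteVariables

variable [Fintype σ]

theorem exists_real_smul_eq_of_sum_norm_sq_eq_one [Nonempty σ] (z : σ → ℂ) :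
    ∃ (ρ : ℝ) (u : σ → ℂ), ∑ i, ‖u i‖ ^ 2 = 1 ∧ z = (ρ : ℂ) • u := by
  classical
  rcases eq_or_ne z 0 with rfl | hz
  · refine ⟨0, Pi.single (Classical.arbitrary σ) 1, ?_, by simp⟩
    simp [Pi.single_apply, apply_ite norm, ite_pow]
  · let ρ := ‖WithLp.toLp 2 z‖
    have hρ : ρ ≠ 0 := by simpa [ρ] using hz
    refine ⟨ρ, (ρ⁻¹ : ℂ) • z, ?_, by simp [smul_smul, hρ]⟩
    have hρsq : ρ ^ 2 = ∑ i, ‖z i‖ ^ 2 := EuclideanSpace.norm_sq_eq _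
    simp [mul_pow, ← Finset.mul_sum, ← hρsq, hρ]

theorem exists_hermitianPairing_eq_real_mul_on_sphere [Nonempty σ] {H X : ι → MvPolynomial σ ℂ}
    {k : ℕ} (hH : ∀ a, (H a).IsHomogeneous d) (hX : ∀ a, (X a).IsHomogeneous k) (z : σ → ℂ) :
    ∃ (r : ℝ) (u : σ → ℂ), ∑ i, ‖u i‖ ^ 2 = 1 ∧
      hermitianPairing H z X = r * hermitianPairing H u X := by
  obtain ⟨ρ, u, hu, rfl⟩ := exists_real_smul_eq_of_sum_norm_sq_eq_one z
  refine ⟨ρ ^ k * ρ ^ d, u, hu, ?_⟩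
  rw [hermitianPairing_smul_point hH hX, Complex.conj_ofReal]
  push_cast
  rfl

/-! ### Infinitesimal deformations -/

/-- The space `hol(H)` of infinitesimal deformations of the polynomial map `H`, as a real
subspace of the space of all holomorphic polynomial maps. -/
noncomputable def infinitesimalDeformations (H : ι → MvPolynomial σ ℂ) :
    Submodule ℝ (ι → MvPolynomial σ ℂ) where
  carrier := {X | ∀ z : σ → ℂ, ∑ i, ‖z i‖ ^ 2 = 1 → (hermitianPairing H z X).re = 0}
  zero_mem' z _ := by simp
  add_mem' hX hY z hz := by simp [hX z hz, hY z hz]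
  smul_mem' r X hX z hz := by
    rw [LinearMap.map_smul_of_tower, Complex.smul_re, hX z hz, smul_zero]

/-- On the sphere `conj p = ∑ i, z i * conj (z i * p)`, which raises the degree of `p` until it
reaches `d`. -/
theorem exists_hermitianPairing_eq_conj_of_isHomogeneous {H : ι → MvPolynomial σ ℂ}
    (hH : homogeneousSubmodule σ ℂ d ≤ Submodule.span ℂ (Set.range H)) (m : ℕ) :
    ∀ {k : ℕ} {p : MvPolynomial σ ℂ}, p.IsHomogeneous k → k + m = d →
      ∃ Z, ∀ z : σ → ℂ, ∑ i, ‖z i‖ ^ 2 = 1 → hermitianPairing H z Z = conj (eval z p) := by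
  induction m with
  | zero =>
    rintro k p hp rfl
    obtain ⟨c, rfl⟩ := (Submodule.mem_span_range_iff_exists_fun ℂ).mp (hH hp)
    exact ⟨fun a ↦ C (conj (c a)), fun z _ ↦ by simp [hermitianPairing_apply]⟩
  | succ m ih =>
    rintro k p hp hk
    choose Z hZ using fun i ↦ ih ((isHomogeneous_X ℂ i).mul hp) (by omega)
    refine ⟨∑ i, X (R := ℂ) i • Z i, fun z hz ↦ ?_⟩
    have hsphere : ∑ i, z i * conj (z i) = 1 := by
      simp only [Complex.mul_conj']
      exact_mod_cast hz
    simp only [map_sum, hermitianPairing_smul, hZ _ z hz, eval_X, map_mul, ← mul_assoc,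
      ← Finset.sum_mul, hsphere, one_mul]

theorem exists_hermitianPairing_eq_conj {H : ι → MvPolynomial σ ℂ}
    (hH : homogeneousSubmodule σ ℂ d ≤ Submodule.span ℂ (Set.range H)) {p : MvPolynomial σ ℂ}
    (hp : p.totalDegree ≤ d) :
    ∃ Z, ∀ z : σ → ℂ, ∑ i, ‖z i‖ ^ 2 = 1 → hermitianPairing H z Z = conj (eval z p) := by
  have hcomponent (k : Fin (p.totalDegree + 1)) :=
    exists_hermitianPairing_eq_conj_of_isHomogeneous hH (d - k)
      (homogeneousComponent_isHomogeneous (k : ℕ) p) (by omega)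
  choose Z hZ using hcomponent
  refine ⟨∑ k, Z k, fun z hz ↦ ?_⟩
  simp only [map_sum, hZ _ z hz]
  rw [Fin.sum_univ_eq_sum_range (fun k ↦ conj (eval z (homogeneousComponent k p))), ← map_sum,
    ← map_sum, sum_homogeneousComponent]

theorem exists_mem_infinitesimalDeformations_coeff_eq {H : ι → MvPolynomial σ ℂ}
    (hspan : Submodule.span ℂ (Set.range H) = homogeneousSubmodule σ ℂ d)
    {Y : ι → MvPolynomial σ ℂ} (hY : ∀ a, (Y a).totalDegree ≤ d) :
    ∃ X ∈ infinitesimalDeformations H, ∀ a s, s.degree < d → coeff s (X a) = coeff s (Y a) := by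
  choose Z hZ using fun b ↦ exists_hermitianPairing_eq_conj hspan.ge (hY b)
  refine ⟨Y - ∑ b, H b • Z b, fun z hz ↦ ?_, fun a s hs ↦ ?_⟩
  · have hconj : hermitianPairing H z (∑ b, H b • Z b) = conj (hermitianPairing H z Y) := by
      simp [hermitianPairing_smul, hZ _ z hz, hermitianPairing_apply H z Y, mul_comm]
    rw [map_sub, hconj, Complex.sub_re, Complex.conj_re, sub_self]
  · have hHom (b : ι) : (H b).IsHomogeneous d := hspan.le (Submodule.subset_span ⟨b, rfl⟩)
    simp [coeff_sum, coeff_mul_eq_zero_of_isHomogeneous (hHom _) _ hs]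

/-- Along a circle `w ↦ w • z` the pairing is `∑ k, ⟨X_k, H⟩(z) * w ^ (k - d)`, where `X_k` is the
component of degree `k`; there are no negative exponents. -/
theorem hermitianPairing_homogeneousComponent_eq_zero_on_sphere {H X : ι → MvPolynomial σ ℂ}
    (hH : ∀ a, (H a).IsHomogeneous d) (hX : X ∈ infinitesimalDeformations H)
    (hlow : ∀ a s, s.degree < d → coeff s (X a) = 0) {k : ℕ} (hk : d < k) {z : σ → ℂ}
    (hz : ∑ i, ‖z i‖ ^ 2 = 1) :
    hermitianPairing H z (homogeneousComponent k ∘ X) = 0 := by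
  let p : Polynomial ℂ := ∑ a,
    aeval (fun i ↦ Polynomial.C (z i) * Polynomial.X) (X a) * Polynomial.C (conj (eval z (H a)))
  have coeff_p (k : ℕ) : p.coeff k = hermitianPairing H z (homogeneousComponent k ∘ X) := by
    simp [p, coeff_aeval_C_mul_X, hermitianPairing_apply]
  have eval_p (w : ℂ) : hermitianPairing H (w • z) X = p.eval w * conj w ^ d := by
    simp only [hermitianPairing_apply, p, Polynomial.eval_finsetSum, Polynomial.eval_mul,
      Polynomial.eval_C, eval_aeval_C_mul_X, eval_smul_of_isHomogeneous (hH _), map_mul, map_pow,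
      Finset.sum_mul]
    exact Finset.sum_congr rfl fun a _ ↦ by ring
  obtain ⟨q, hq⟩ : Polynomial.X ^ d ∣ p := Polynomial.X_pow_dvd_iff.mpr fun k hk ↦ by
    have hzero : homogeneousComponent k ∘ X = 0 := by
      ext a s
      rw [Function.comp_apply, coeff_homogeneousComponent]
      split_ifs with hs
      exacts [hlow a s (hs.trans_lt hk), rfl]
    rw [coeff_p, hzero, map_zero]
  have hre (w : ℂ) (hw : ‖w‖ = 1) : (q.eval w).re = 0 := by
    have hsphere : ∑ i, ‖(w • z) i‖ ^ 2 = 1 := by simpa [hw] using hz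
    have hconj : w * conj w = 1 := by simp [Complex.mul_conj', hw]
    have heval : hermitianPairing H (w • z) X = q.eval w := by
      rw [eval_p, hq, Polynomial.eval_mul, Polynomial.eval_pow, Polynomial.eval_X, mul_right_comm,
        ← mul_pow, hconj, one_pow, one_mul]
    exact heval ▸ hX _ hsphere
  rw [← coeff_p, hq, Polynomial.coeff_X_pow_mul', if_pos hk.le,
    coeff_eq_zero_of_re_eval_eq_zero_on_circle hre (by omega)]

theorem isHomogeneous_of_mem_infinitesimalDeformations [Nonempty σ]
    {H X : ι → MvPolynomial σ ℂ} (hli : LinearIndependent ℂ H)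
    (hH : ∀ a, (H a).IsHomogeneous d) (hX : X ∈ infinitesimalDeformations H)
    (hlow : ∀ a s, s.degree < d → coeff s (X a) = 0) (a : ι) : (X a).IsHomogeneous d := by
  intro s hs
  suffices s.degree = d by rwa [Finsupp.degree_eq_weight_one] at this
  refine le_antisymm (not_lt.mp fun hd ↦ hs ?_) (not_lt.mp fun hd ↦ hs (hlow a s hd))
  have hcomponent : homogeneousComponent s.degree ∘ X = 0 := by
    refine eq_zero_of_hermitianPairing_eq_zero hli fun z ↦ ?_
    obtain ⟨r, u, hu, hr⟩ := exists_hermitianPairing_eq_real_mul_on_sphere hH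
      (fun a ↦ homogeneousComponent_isHomogeneous s.degree (X a)) z
    rw [Function.comp_def, hr]
    exact mul_eq_zero_of_right _
      (hermitianPairing_homogeneousComponent_eq_zero_on_sphere hH hX hlow hd hu)
  simpa [coeff_homogeneousComponent] using congr(coeff s ($hcomponent a))

theorem re_hermitianPairing_eq_zero_of_mem_infinitesimalDeformations [Nonempty σ]
    {H X : ι → MvPolynomial σ ℂ} {k : ℕ} (hH : ∀ a, (H a).IsHomogeneous d)
    (hXhom : ∀ a, (X a).IsHomogeneous k) (hX : X ∈ infinitesimalDeformations H) (z : σ → ℂ) :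
    (hermitianPairing H z X).re = 0 := by
  obtain ⟨r, u, hu, hr⟩ := exists_hermitianPairing_eq_real_mul_on_sphere hH hXhom z
  rw [hr, Complex.re_ofReal_mul, hX u hu, mul_zero]

theorem matrixDeformation_mem_infinitesimalDeformations_iff [Nonempty σ]
    {H : ι → MvPolynomial σ ℂ} (hli : LinearIndependent ℂ H) (hH : ∀ a, (H a).IsHomogeneous d)
    {A : Matrix ι ι ℂ} :
    matrixDeformation H A ∈ infinitesimalDeformations H ↔ A ∈ skewAdjoint (Matrix ι ι ℂ) := by
  have pairing_add_star (z : σ → ℂ) : hermitianPairing H z (matrixDeformation H (star A + A)) =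
      (2 * (hermitianPairing H z (matrixDeformation H A)).re : ℝ) := by
    rw [map_add, map_add, hermitianPairing_matrixDeformation_star, add_comm, Complex.add_conj]
  rw [skewAdjoint.mem_iff, ← add_eq_zero_iff_eq_neg]
  refine ⟨fun hA ↦ matrixDeformation_injective hli ?_, fun hA z _ ↦ ?_⟩
  · rw [map_zero]
    refine eq_zero_of_hermitianPairing_eq_zero hli fun z ↦ ?_
    rw [pairing_add_star, re_hermitianPairing_eq_zero_of_mem_infinitesimalDeformations hH
      (isHomogeneous_matrixDeformation hH A) hA, mul_zero, Complex.ofReal_zero]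
  · exact_mod_cast (by simpa [hA] using pairing_add_star z :
      ((hermitianPairing H z (matrixDeformation H A)).re : ℂ) = 0)

theorem map_lowCoeffs_infinitesimalDeformations {H : ι → MvPolynomial σ ℂ}
    (hspan : Submodule.span ℂ (Set.range H) = homogeneousSubmodule σ ℂ d) :
    (infinitesimalDeformations H).map (lowCoeffs σ ι d) = ⊤ := by
  classical
  have : Fintype {s : σ →₀ ℕ // s.degree < d} := (Finsupp.finite_of_degree_lt d).fintype
  refine top_le_iff.mp fun c _ ↦ ?_
  let Y (a : ι) : MvPolynomial σ ℂ := ∑ s, monomial s.1 (c a s)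
  have hY (a : ι) : (Y a).totalDegree ≤ d :=
    totalDegree_finsetSum_le fun s _ ↦ (totalDegree_monomial_le _ _).trans s.2.le
  obtain ⟨X, hX, hXY⟩ := exists_mem_infinitesimalDeformations_coeff_eq hspan hY
  refine ⟨X, hX, ?_⟩
  ext a s
  rw [lowCoeffs_apply, hXY a s.1 s.2]
  simp [Y, coeff_sum, coeff_monomial, ← Subtype.ext_iff]

theorem infinitesimalDeformations_inf_ker_lowCoeffs [Nonempty σ] {H : ι → MvPolynomial σ ℂ}
    (hli : LinearIndependent ℂ H)
    (hspan : Submodule.span ℂ (Set.range H) = homogeneousSubmodule σ ℂ d) :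
    infinitesimalDeformations H ⊓ (lowCoeffs σ ι d).ker =
      (skewAdjoint.submodule ℝ (Matrix ι ι ℂ)).map
        ((matrixDeformation H).restrictScalars ℝ) := by
  have hH (a : ι) : (H a).IsHomogeneous d := hspan.le (Submodule.subset_span ⟨a, rfl⟩)
  ext X
  simp only [Submodule.mem_inf, mem_ker_lowCoeffs, Submodule.mem_map]
  constructor
  · rintro ⟨hX, hlow⟩
    have hXspan (a : ι) : X a ∈ Submodule.span ℂ (Set.range H) :=
      hspan.ge (isHomogeneous_of_mem_infinitesimalDeformations hli hH hX hlow a)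
    choose A hA using fun a ↦ (Submodule.mem_span_range_iff_exists_fun ℂ).mp (hXspan a)
    obtain rfl : matrixDeformation H A = X := funext hA
    exact ⟨A, (matrixDeformation_mem_infinitesimalDeformations_iff hli hH).mp hX, rfl⟩
  · rintro ⟨A, hA, rfl⟩
    exact ⟨(matrixDeformation_mem_infinitesimalDeformations_iff hli hH).mpr hA, fun a s hs ↦
      (isHomogeneous_matrixDeformation hH A a).coeff_eq_zero hs.ne⟩

theorem dim_infinitesimal_deformations_homogeneous_map_general [Nonempty σ]
    {H : ι → MvPolynomial σ ℂ} (hli : LinearIndependent ℂ H)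
    (hspan : Submodule.span ℂ (Set.range H) = homogeneousSubmodule σ ℂ d) :
    Module.finrank ℝ (infinitesimalDeformations H) =
      Fintype.card ι * Fintype.card ι +
        2 * Fintype.card ι * (Fintype.card σ + d - 1).choose (Fintype.card σ) := by
  have : Fintype {s : σ →₀ ℕ // s.degree < d} := (Finsupp.finite_of_degree_lt d).fintype
  have hmap := map_lowCoeffs_infinitesimalDeformations hspan
  have hker := infinitesimalDeformations_inf_ker_lowCoeffs hli hspan
  have : Module.Finite ℝ ↥(infinitesimalDeformations H ⊓ (lowCoeffs σ ι d).ker) := by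
    rw [hker]
    infer_instance
  have hinj : Function.Injective ((matrixDeformation H).restrictScalars ℝ) :=
    matrixDeformation_injective hli
  have hskew := finrank_real_skewAdjoint (Matrix ι ι ℂ)
  rw [Module.finrank_matrix, Module.finrank_self, mul_one] at hskew
  rw [← finrank_map_add_finrank_inf_ker (lowCoeffs σ ι d), hmap, hker, finrank_top,
    ← (Submodule.equivMapOfInjective _ hinj _).finrank_eq, hskew]
  simp [Module.finrank_pi_fintype, ← card_finsupp_degree_lt]
  ring

end FiniteVariables

end MvPolynomial

section HomogeneousMap

variable {n d : ℕ}

/-- The homogeneous sphere map `H_n^d` as a family of polynomials; `homComp` gives its values. -/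
noncomputable def homogeneousMap (n d : ℕ)
    (α : {α // α ∈ piAntidiag (univ : Finset (Fin n)) d}) : MvPolynomial (Fin n) ℂ :=
  monomial (Finsupp.equivFunOnFinite.symm α.1) (Real.sqrt (Nat.multinomial univ α.1) : ℂ)

theorem eval_homogeneousMap (z : Fin n → ℂ)
    (α : {α // α ∈ piAntidiag (univ : Finset (Fin n)) d}) :
    eval z (homogeneousMap n d α) = homComp α.1 z := by
  simp [homogeneousMap, homComp, eval_monomial, Finsupp.prod_fintype]

theorem linearIndependent_homogeneousMap : LinearIndependent ℂ (homogeneousMap n d) := by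
  refine Fintype.linearIndependent_iff.mpr fun c hc α ↦ ?_
  simpa [homogeneousMap, coeff_sum, coeff_monomial, ← Subtype.ext_iff,
    (Nat.multinomial_pos _ _).ne'] using
    congr(coeff (Finsupp.equivFunOnFinite.symm α.1) $hc)

theorem span_range_homogeneousMap :
    Submodule.span ℂ (Set.range (homogeneousMap n d)) = homogeneousSubmodule (Fin n) ℂ d := by
  refine le_antisymm (Submodule.span_le.mpr ?_) fun p hp ↦ ?_
  · rintro _ ⟨α, rfl⟩
    refine isHomogeneous_monomial _ ?_
    rw [Finsupp.degree_eq_sum]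
    exact (mem_piAntidiag.mp α.2).1
  · rw [p.as_sum]
    refine Submodule.sum_mem _ fun s hs ↦ ?_
    have hs_mem : ⇑s ∈ piAntidiag univ d := by
      have hdegree : s.degree = d := by
        rw [Finsupp.degree_eq_weight_one]
        exact hp (mem_support_iff.mp hs)
      simp [← hdegree, Finsupp.degree_eq_sum]
    have hmonomial : monomial s (coeff s p) =
        (coeff s p / Real.sqrt (Nat.multinomial univ s)) • homogeneousMap n d ⟨s, hs_mem⟩ := by
      simp [homogeneousMap, smul_monomial, div_mul_cancel₀ _ (sqrt_multinomial_ne_zero _)]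
    rw [hmonomial]
    exact Submodule.smul_mem _ _ (Submodule.subset_span ⟨_, rfl⟩)

theorem setOf_re_sum_mul_conj_homComp_eq_zero :
    {X : {α // α ∈ piAntidiag (univ : Finset (Fin n)) d} → MvPolynomial (Fin n) ℂ |
      ∀ z : Fin n → ℂ, (∑ i, ‖z i‖ ^ 2 = 1) →
        (∑ a, eval z (X a) * conj (homComp a.1 z)).re = 0} =
      infinitesimalDeformations (homogeneousMap n d) := by
  simp only [← eval_homogeneousMap]
  rfl

end HomogeneousMap

/-- The real dimension of the space `hol(H_n^d)` of infinitesimal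
deformations of the homogeneous sphere map `H_n^d` — holomorphic polynomial maps
`X : ℂⁿ → ℂ^{K(n,d)}` with `Re(X · conj H_n^d) = 0` on `S^{2n-1}` — equals
`((2d+n)/d)·K(n,d)² = K(n,d)² + 2 K(n,d) C(n+d−1, n)`, where `K(n,d) = C(n+d−1,d)`. -/
theorem dim_infinitesimal_deformations_homogeneous_map (n d : ℕ) (hn : 2 ≤ n)
    (hd : 1 ≤ d) :
    Module.finrank ℝ
      (Submodule.span ℝ
        {X : ({α // α ∈ Finset.piAntidiag (Finset.univ : Finset (Fin n)) d} →
            MvPolynomial (Fin n) ℂ) |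
          ∀ z : Fin n → ℂ, (∑ i, ‖z i‖ ^ 2 = 1) →
            (∑ a, MvPolynomial.eval z (X a) * (starRingEnd ℂ) (homComp a.1 z)).re = 0})
      = (n + d - 1).choose d * (n + d - 1).choose d
        + 2 * (n + d - 1).choose d * (n + d - 1).choose n := by
  have : NeZero n := ⟨by omega⟩
  rw [setOf_re_sum_mul_conj_homComp_eq_zero, Submodule.span_eq,
    dim_infinitesimal_deformations_homogeneous_map_general linearIndependent_homogeneousMap
      span_range_homogeneousMap, Fintype.card_coe, card_piAntidiag_univ, Fintype.card_fin]
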